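/- Let n be an odd square-free positive integer. Then every orbit of the Hecke group H(λ₄) acting on Q*(√-n) contains a unique totally negative quadruplet: there exists α in the orbit such that Q_α = {α, y(α), y²(α), y³(α)} consists entirely of totally negative elements, and if α and α' both lie in the orbit with Q_α and Q_{α'} totally negative quadruplets, then Q_α = Q_{α'} as sets. -/

import Mathlib

open Complex

/-- The set `Q*(√-n)` of complex numbers `(a + √n·i)/c` with `a, c ∈ ℤ`,
`c` even and nonzero, and `c ∣ a² + n`. -/
def Qstar (n : ℕ) : Set ℂ :=
  {z | ∃ a c : ℤ, c ≠ 0 ∧ 2 ∣ c ∧ c ∣ (a ^ 2 + (n : ℤ)) ∧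
    z = ((a : ℂ) + Real.sqrt n * Complex.I) / (c : ℂ)}

/-- The Hecke transformation `x(z) = -1/(2z)`. -/
noncomputable def heckeX (z : ℂ) : ℂ := -1 / (2 * z)

/-- The Hecke transformation `y(z) = -1/(2(z+1))`. -/
noncomputable def heckeY (z : ℂ) : ℂ := -1 / (2 * (z + 1))

/-- One step of the Hecke group action. -/
noncomputable def heckeStep (z w : ℂ) : Prop := w = heckeX z ∨ w = heckeY z

/-- Two elements lie in the same orbit if they are related by the equivalence
relation on `Q*(√-n)` generated by `z ~ x(z)` and `z ~ y(z)`. -/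
def sameOrbit (n : ℕ) (z w : ℂ) : Prop :=
  Relation.EqvGen (fun u v => u ∈ Qstar n ∧ v ∈ Qstar n ∧ heckeStep u v) z w

/-- The quadruplet `Q_α = {α, y(α), y²(α), y³(α)}`. -/
noncomputable def quad (α : ℂ) : Set ℂ :=
  {α, heckeY α, heckeY (heckeY α), heckeY (heckeY (heckeY α))}

/-- The orbit relation on the subtype `Q*(√-n)`. -/
def orbitRel (n : ℕ) (u v : {z : ℂ // z ∈ Qstar n}) : Prop :=
  sameOrbit n u.1 v.1

/-- `E_i(n)`: the number of positive even integers `C` dividing `i² + n`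
with `2(i²+n)/C + C ≤ 3i`. -/
def Efun (i n : ℕ) : ℕ :=
  ((i ^ 2 + n).divisors.filter (fun C => 2 ∣ C ∧ 2 * (i ^ 2 + n) / C + C ≤ 3 * i)).card

/-! The function `heckeHeight` is twice the hyperbolic cosine of the distance to the fixed point
`(-1 ± i) / 2` of `y` in the half-plane of its argument, so it is constant on each quadruplet. A
quadruplet contains at most one element of positive real part; at such an element `x` strictly
lowers the height, which is a natural number divided by `√n` on `Q*(√-n)`. Hence applying `x` at
the positive element is a terminating and deterministic rewriting rule on quadruplets. For odd `n`
no element of `Q*(√-n)` is purely imaginary, so the totally negative quadruplets are exactly the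
normal forms, and by confluence each orbit contains exactly one of them. -/

section Hecke

variable {z w : ℂ}

lemma heckeX_eq_ofReal_mul_inv (z : ℂ) : heckeX z = ((-1 / 2 : ℝ) : ℂ) * z⁻¹ := by
  rw [heckeX]
  push_cast
  ring

lemma heckeX_re (z : ℂ) : (heckeX z).re = -z.re / (2 * normSq z) := by
  rw [heckeX_eq_ofReal_mul_inv, re_ofReal_mul, inv_re]
  ring

lemma heckeX_im (z : ℂ) : (heckeX z).im = z.im / (2 * normSq z) := by
  rw [heckeX_eq_ofReal_mul_inv, im_ofReal_mul, inv_im]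
  ring

lemma normSq_heckeX (z : ℂ) : normSq (heckeX z) = 1 / (4 * normSq z) := by
  rw [heckeX_eq_ofReal_mul_inv, normSq_mul, normSq_ofReal, normSq_inv]
  ring

lemma heckeX_heckeX (z : ℂ) : heckeX (heckeX z) = z := by
  rw [heckeX_eq_ofReal_mul_inv, heckeX_eq_ofReal_mul_inv, mul_inv, inv_inv]
  push_cast
  ring

lemma heckeY_eq_heckeX_add_one (z : ℂ) : heckeY z = heckeX (z + 1) := rfl

lemma ne_zero_of_re_ne_zero (hz : z.re ≠ 0) : z ≠ 0 := by
  rintro rfl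
  exact hz zero_re

lemma heckeX_re_neg (hz : 0 < z.re) : (heckeX z).re < 0 := by
  have : 0 < normSq z := normSq_pos.2 (ne_zero_of_re_ne_zero hz.ne')
  rw [heckeX_re]
  exact div_neg_of_neg_of_pos (neg_neg_of_pos hz) (by positivity)

lemma heckeX_re_pos (hz : z.re < 0) : 0 < (heckeX z).re := by
  have : 0 < normSq z := normSq_pos.2 (ne_zero_of_re_ne_zero hz.ne)
  rw [heckeX_re]
  exact div_pos (neg_pos.2 hz) (by positivity)

lemma neg_inv_lt_heckeX_re {r : ℝ} (hr : 0 < r) (hz : r < z.re) :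
    -(2 * r)⁻¹ < (heckeX z).re := by
  have hre : r * z.re < normSq z := by
    rw [normSq_apply]
    nlinarith [mul_self_nonneg z.im]
  have hnorm : 0 < normSq z := (mul_pos hr (hr.trans hz)).trans hre
  rw [heckeX_re, neg_div, neg_lt_neg_iff, ← one_div,
    div_lt_div_iff₀ (by positivity) (by positivity)]
  linarith

lemma heckeY_re_neg (hz : -1 < z.re) : (heckeY z).re < 0 :=
  heckeX_re_neg (by simpa using neg_lt_iff_pos_add.1 hz)

lemma heckeY_heckeY (hz : z + 1 ≠ 0) : heckeY (heckeY z) = -(z + 1) / (2 * z + 1) := by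
  have hY : heckeY z + 1 = (2 * z + 1) / (2 * (z + 1)) := by
    unfold heckeY
    field_simp
    ring
  rw [heckeY, hY]
  field_simp

lemma heckeY_heckeY_heckeY_add_one (hz : z.im ≠ 0) :
    heckeY (heckeY (heckeY z)) + 1 = heckeX z := by
  have hzero : z ≠ 0 := fun h => hz (by simp [h])
  have hadd : z + 1 ≠ 0 := fun h => hz (by simpa using congrArg im h)
  have htwo : 2 * z + 1 ≠ 0 := fun h => hz (by simpa using congrArg im h)
  have hYY : heckeY (heckeY z) + 1 = z / (2 * z + 1) := by
    rw [heckeY_heckeY hadd, div_add_one htwo]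
    congr 1
    ring
  rw [heckeY, hYY, heckeX]
  field_simp
  ring

lemma heckeY_iterate_four (hz : z.im ≠ 0) : heckeY (heckeY (heckeY (heckeY z))) = z := by
  rw [heckeY_eq_heckeX_add_one, heckeY_heckeY_heckeY_add_one hz, heckeX_heckeX]

lemma quad_heckeY (hz : z.im ≠ 0) : quad (heckeY z) = quad z := by
  ext w
  simp only [quad, heckeY_iterate_four hz, Set.mem_insert_iff, Set.mem_singleton_iff]
  tauto

lemma self_mem_quad (z : ℂ) : z ∈ quad z := Set.mem_insert _ _

lemma mem_quad_induction {P : ℂ → Prop} (hP : ∀ u, P u → P (heckeY u)) (hz : P z)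
    (hw : w ∈ quad z) : P w := by
  rcases hw with rfl | rfl | rfl | rfl
  · exact hz
  · exact hP _ hz
  · exact hP _ (hP _ hz)
  · exact hP _ (hP _ (hP _ hz))

lemma eq_of_mem_quad_of_re_nonneg (hz : 0 < z.re) (hw : w ∈ quad z) (hre : 0 ≤ w.re) :
    w = z := by
  have hY : -(1 / 2) < (heckeY z).re := by
    simpa [heckeY_eq_heckeX_add_one] using
      neg_inv_lt_heckeX_re (z := z + 1) one_pos (by simpa using hz)
  have hYY : -1 < (heckeY (heckeY z)).re := by
    simpa [heckeY_eq_heckeX_add_one] using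
      neg_inv_lt_heckeX_re (z := heckeY z + 1) one_half_pos (by rw [add_re, one_re]; linarith)
  rcases hw with rfl | rfl | rfl | rfl
  · rfl
  · exact absurd (heckeY_re_neg (by linarith)) hre.not_gt
  · exact absurd (heckeY_re_neg (by linarith)) hre.not_gt
  · exact absurd (heckeY_re_neg hYY) hre.not_gt

end Hecke

section Height

/-- Twice `cosh` of the hyperbolic distance from `z` to the fixed point of `y` lying in the same
half-plane (upper or lower) as `z`; the quantity that decreases in the reduction of quadruplets.
It takes the junk value `0` for real `z`. -/
noncomputable def heckeHeight (z : ℂ) : ℝ := (2 * normSq z + 2 * z.re + 1) / |z.im|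

lemma heckeHeight_heckeX (z : ℂ) :
    heckeHeight (heckeX z) = (2 * normSq z - 2 * z.re + 1) / |z.im| := by
  obtain rfl | hz := eq_or_ne z 0
  · simp [heckeHeight, heckeX]
  have hpos : 0 < normSq z := normSq_pos.2 hz
  rw [heckeHeight, heckeX_re, heckeX_im, normSq_heckeX, abs_div, abs_of_pos (mul_pos two_pos hpos)]
  field_simp
  ring

lemma heckeHeight_heckeY (z : ℂ) : heckeHeight (heckeY z) = heckeHeight z := by
  rw [heckeY_eq_heckeX_add_one, heckeHeight_heckeX, heckeHeight, normSq_add]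
  simp only [map_one, mul_one, add_re, one_re, add_im, one_im, add_zero]
  ring

lemma heckeHeight_heckeX_lt {z : ℂ} (him : z.im ≠ 0) (hre : 0 < z.re) :
    heckeHeight (heckeX z) < heckeHeight z := by
  have : 0 < |z.im| := abs_pos.2 him
  rw [heckeHeight_heckeX, heckeHeight]
  gcongr
  linarith

end Height

section Qstar

variable {n : ℕ} {z w : ℂ}

lemma mem_Qstar_iff : z ∈ Qstar n ↔ ∃ a c : ℤ, c ≠ 0 ∧ 2 ∣ c ∧ c ∣ a ^ 2 + (n : ℤ) ∧
    z.re = a / c ∧ z.im = √n / c := by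
  simp only [Qstar, Set.mem_ofPred_eq, Complex.ext_iff, ← ofReal_intCast, div_ofReal_re,
    div_ofReal_im]
  simp

lemma im_ne_zero_of_mem_Qstar (hn : 0 < n) (hz : z ∈ Qstar n) : z.im ≠ 0 := by
  obtain ⟨a, c, hc, -, -, -, him⟩ := mem_Qstar_iff.1 hz
  rw [him]
  positivity

lemma re_ne_zero_of_mem_Qstar (hodd : Odd n) (hz : z ∈ Qstar n) : z.re ≠ 0 := by
  obtain ⟨a, c, hc, heven, hdvd, hre, -⟩ := mem_Qstar_iff.1 hz
  have ha : a ≠ 0 := by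
    rintro rfl
    have : 2 ∣ (n : ℤ) := by simpa using heven.trans hdvd
    exact hodd.not_two_dvd_nat (by exact_mod_cast this)
  rw [hre]
  positivity

lemma normSq_eq_intCast_div {a c e : ℤ} (hc : c ≠ 0) (he : a ^ 2 + (n : ℤ) = c * e)
    (hre : z.re = a / c) (him : z.im = √n / c) : normSq z = e / c := by
  have he' : (a : ℝ) ^ 2 + n = c * e := by exact_mod_cast he
  have hsqrt : √(n : ℝ) ^ 2 = n := Real.sq_sqrt n.cast_nonneg
  rw [normSq_apply, hre, him]
  field_simp
  linarith

lemma add_one_mem_Qstar (hz : z ∈ Qstar n) : z + 1 ∈ Qstar n := by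
  obtain ⟨a, c, hc, heven, hdvd, hre, him⟩ := mem_Qstar_iff.1 hz
  refine mem_Qstar_iff.2 ⟨a + c, c, hc, heven, ?_, ?_, by simpa using him⟩
  · have hexpand : (a + c) ^ 2 + (n : ℤ) = a ^ 2 + n + c * (2 * a + c) := by ring
    exact hexpand ▸ hdvd.add (dvd_mul_right c _)
  · rw [add_re, hre, one_re]
    push_cast
    exact div_add_one (by exact_mod_cast hc)

lemma heckeX_mem_Qstar (hn : 0 < n) (hz : z ∈ Qstar n) : heckeX z ∈ Qstar n := by
  obtain ⟨a, c, hc, ⟨d, hd⟩, ⟨e, he⟩, hre, him⟩ := mem_Qstar_iff.1 hz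
  have he0 : e ≠ 0 := by
    rintro rfl
    have : 0 < a ^ 2 + (n : ℤ) := by positivity
    simp_all
  have hnorm := normSq_eq_intCast_div hc he hre him
  refine mem_Qstar_iff.2 ⟨-a, 2 * e, by simpa using he0, dvd_mul_right _ _, ⟨d, ?_⟩, ?_, ?_⟩
  · linear_combination he + e * hd
  · rw [heckeX_re, hre, hnorm]
    push_cast
    field_simp
  · rw [heckeX_im, him, hnorm]
    push_cast
    field_simp

lemma heckeY_mem_Qstar (hn : 0 < n) (hz : z ∈ Qstar n) : heckeY z ∈ Qstar n :=
  heckeX_mem_Qstar hn (add_one_mem_Qstar hz)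

lemma exists_nat_eq_sqrt_mul_heckeHeight (hn : 0 < n) (hz : z ∈ Qstar n) :
    ∃ k : ℕ, √n * heckeHeight z = k := by
  obtain ⟨a, c, hc, -, ⟨e, he⟩, hre, him⟩ := mem_Qstar_iff.1 hz
  have hnum : 2 * normSq z + 2 * z.re + 1 = ((2 * e + 2 * a + c : ℤ) : ℝ) / c := by
    rw [normSq_eq_intCast_div hc he hre him, hre]
    push_cast
    field_simp
  have hnonneg : 0 ≤ 2 * normSq z + 2 * z.re + 1 := by
    rw [normSq_apply]
    nlinarith [sq_nonneg (z.re + 1), sq_nonneg z.re, sq_nonneg z.im]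
  refine ⟨(2 * e + 2 * a + c).natAbs, ?_⟩
  rw [heckeHeight, ← abs_of_nonneg hnonneg, hnum, him, abs_div, abs_div,
    abs_of_nonneg (Real.sqrt_nonneg _), Nat.cast_natAbs, Int.cast_abs]
  field_simp

lemma sameOrbit_heckeX (hn : 0 < n) (hz : z ∈ Qstar n) : sameOrbit n z (heckeX z) :=
  .rel _ _ ⟨hz, heckeX_mem_Qstar hn hz, .inl rfl⟩

lemma sameOrbit_heckeY (hn : 0 < n) (hz : z ∈ Qstar n) : sameOrbit n z (heckeY z) :=
  .rel _ _ ⟨hz, heckeY_mem_Qstar hn hz, .inr rfl⟩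

lemma heckeHeight_eq_of_mem_quad (hw : w ∈ quad z) : heckeHeight w = heckeHeight z :=
  mem_quad_induction (P := fun u => heckeHeight u = heckeHeight z)
    (fun u hu => (heckeHeight_heckeY u).trans hu) rfl hw

lemma mem_Qstar_and_sameOrbit_of_mem_quad (hn : 0 < n) (hz : z ∈ Qstar n) (hw : w ∈ quad z) :
    w ∈ Qstar n ∧ sameOrbit n z w :=
  mem_quad_induction (P := fun u => u ∈ Qstar n ∧ sameOrbit n z u)
    (fun _ hu => ⟨heckeY_mem_Qstar hn hu.1, hu.2.trans _ _ _ (sameOrbit_heckeY hn hu.1)⟩)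
    ⟨hz, .refl z⟩ hw

theorem exists_sameOrbit_forall_mem_quad_re_neg (hodd : Odd n) (hz : z ∈ Qstar n) :
    ∃ α ∈ Qstar n, sameOrbit n z α ∧ ∀ w ∈ quad α, w.re < 0 := by
  have hn : 0 < n := hodd.pos
  obtain ⟨k, hk⟩ := exists_nat_eq_sqrt_mul_heckeHeight hn hz
  induction k using Nat.strong_induction_on generalizing z with
  | _ k ih =>
    by_cases hneg : ∀ w ∈ quad z, w.re < 0
    · exact ⟨z, hz, .refl z, hneg⟩
    push Not at hneg
    obtain ⟨w, hwz, hw_nonneg⟩ := hneg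
    obtain ⟨hw, hzw⟩ := mem_Qstar_and_sameOrbit_of_mem_quad hn hz hwz
    have hw_pos : 0 < w.re := hw_nonneg.lt_of_ne' (re_ne_zero_of_mem_Qstar hodd hw)
    obtain ⟨j, hj⟩ := exists_nat_eq_sqrt_mul_heckeHeight hn (heckeX_mem_Qstar hn hw)
    have hjk : j < k := by
      rw [← Nat.cast_lt (α := ℝ), ← hj, ← hk, ← heckeHeight_eq_of_mem_quad hwz]
      gcongr
      exact heckeHeight_heckeX_lt (im_ne_zero_of_mem_Qstar hn hw) hw_pos
    obtain ⟨α, hα, hwα, hα_neg⟩ := ih j hjk (heckeX_mem_Qstar hn hw) hj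
    exact ⟨α, hα, hzw.trans _ _ _ ((sameOrbit_heckeX hn hw).trans _ _ _ hwα), hα_neg⟩

end Qstar

section Reduction

open Relation

/-- One reduction step on quadruplets: apply `x` at an element of positive real part. It is
formulated on sets because a quadruplet does not remember which of its elements generates it. -/
def QuadReduces (Q Q' : Set ℂ) : Prop :=
  ∃ z : ℂ, 0 < z.re ∧ Q = quad z ∧ Q' = quad (heckeX z)

lemma QuadReduces.rightUnique : Relator.RightUnique QuadReduces := by
  rintro _ _ _ ⟨z, hz, rfl, rfl⟩ ⟨w, hw, hzw, rfl⟩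
  rw [eq_of_mem_quad_of_re_nonneg hz (hzw ▸ self_mem_quad w) hw.le]

lemma equivalence_join_quadReduces : Equivalence (Join (ReflTransGen QuadReduces)) :=
  equivalence_join_reflTransGen fun _ b _ hb hc =>
    ⟨b, .refl, QuadReduces.rightUnique hb hc ▸ .refl⟩

lemma eq_of_reflTransGen_quadReduces {Q Q' : Set ℂ} (hQ : ∀ z ∈ Q, z.re < 0)
    (h : ReflTransGen QuadReduces Q Q') : Q' = Q := by
  obtain rfl | ⟨_, ⟨z, hz, rfl, -⟩, -⟩ := h.cases_head
  · rfl
  · exact absurd hz (hQ z (self_mem_quad z)).not_gt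

lemma join_quadReduces_heckeX {z : ℂ} (hz : z.re ≠ 0) :
    Join (ReflTransGen QuadReduces) (quad z) (quad (heckeX z)) := by
  obtain hneg | hpos := hz.lt_or_gt
  · exact ⟨quad z, .refl, .single ⟨heckeX z, heckeX_re_pos hneg, rfl, by rw [heckeX_heckeX]⟩⟩
  · exact ⟨quad (heckeX z), .single ⟨z, hpos, rfl, rfl⟩, .refl⟩

theorem join_quadReduces_of_sameOrbit {n : ℕ} (hodd : Odd n) {z w : ℂ} (h : sameOrbit n z w) :
    Join (ReflTransGen QuadReduces) (quad z) (quad w) := by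
  refine (equivalence_join_quadReduces.comap quad).eqvGen_iff.1 (h.mono ?_)
  rintro u _ ⟨hu, -, rfl | rfl⟩
  · exact join_quadReduces_heckeX (re_ne_zero_of_mem_Qstar hodd hu)
  · change Join (ReflTransGen QuadReduces) (quad u) (quad (heckeY u))
    rw [quad_heckeY (im_ne_zero_of_mem_Qstar hodd.pos hu)]
    exact equivalence_join_quadReduces.refl _

end Reduction

theorem quad_eq_of_sameOrbit {n : ℕ} (hodd : Odd n) {α α' : ℂ} (h : sameOrbit n α α')
    (hα : ∀ z ∈ quad α, z.re < 0) (hα' : ∀ z ∈ quad α', z.re < 0) : quad α = quad α' := by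
  obtain ⟨Q, hQ, hQ'⟩ := join_quadReduces_of_sameOrbit hodd h
  rw [← eq_of_reflTransGen_quadReduces hα hQ, ← eq_of_reflTransGen_quadReduces hα' hQ']

theorem stmt13_general (n : ℕ) (hodd : Odd n) (γ : ℂ) (hγ : γ ∈ Qstar n) :
    (∃ α ∈ Qstar n, sameOrbit n γ α ∧ ∀ z ∈ quad α, z.re < 0) ∧
    (∀ α α' : ℂ, sameOrbit n γ α → sameOrbit n γ α' →
      (∀ z ∈ quad α, z.re < 0) → (∀ z ∈ quad α', z.re < 0) →
      quad α = quad α') :=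
  ⟨exists_sameOrbit_forall_mem_quad_re_neg hodd hγ,
    fun _ _ h h' => quad_eq_of_sameOrbit hodd ((h.symm _ _).trans _ _ _ h')⟩

theorem stmt13 (n : ℕ) (hn : 0 < n) (hodd : Odd n) (hsf : Squarefree n)
    (γ : ℂ) (hγ : γ ∈ Qstar n) :
    (∃ α ∈ Qstar n, sameOrbit n γ α ∧ ∀ z ∈ quad α, z.re < 0) ∧
    (∀ α ∈ Qstar n, ∀ α' ∈ Qstar n, sameOrbit n γ α → sameOrbit n γ α' →
      (∀ z ∈ quad α, z.re < 0) → (∀ z ∈ quad α', z.re < 0) →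
      quad α = quad α') := by
  obtain ⟨hexists, hunique⟩ := stmt13_general n hodd γ hγ
  exact ⟨hexists, fun α _ α' _ => hunique α α'⟩
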